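/- arXiv:1610.06082 — 3 statements merged into one kernel-verified Lean document; each statement's English description precedes it below -/
import Mathlib

section
/- For linear codes C₂ ⊊ C ⊆ 𝔽_q^n, the relative minimum distance satisfies d(C₂^⊥, C^⊥) = min { #I : I ⊆ [n], dim((C₂^⊥)^I / (C^⊥)^I) = 1 }. -/
open Module

section CodeDefs

variable {F : Type*} [Field F] [Fintype F] [DecidableEq F]

/-- Restriction (puncturing) of a code to the coordinates in `I`. -/
def restrictCode {ι : Type*} (C : Submodule F (ι → F)) (I : Finset ι) :
    Submodule F ({ i // i ∈ I } → F) :=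
  C.map (LinearMap.funLeft F F Subtype.val)

/-- The submodule of vectors supported inside `I`. -/
def zeroOutside {F : Type*} [Field F] {ι : Type*} (I : Finset ι) :
    Submodule F (ι → F) where
  carrier := {c | ∀ j ∉ I, c j = 0}
  add_mem' := by
    intro a b ha hb j hj
    simp [Pi.add_apply, ha j hj, hb j hj]
  zero_mem' := by intro j hj; rfl
  smul_mem' := by
    intro r a ha j hj
    simp [Pi.smul_apply, ha j hj]

/-- Shortening of a code at the coordinates in `I`. -/
def shortenCode {ι : Type*} (C : Submodule F (ι → F)) (I : Finset ι) :
    Submodule F ({ i // i ∈ I } → F) :=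
  (C ⊓ zeroOutside I).map (LinearMap.funLeft F F Subtype.val)

/-- Dual code with respect to the standard bilinear form. -/
def dualCode {ι : Type*} [Fintype ι] (C : Submodule F (ι → F)) :
    Submodule F (ι → F) where
  carrier := {x | ∀ c ∈ C, ∑ i, x i * c i = 0}
  add_mem' := by
    intro a b ha hb c hc
    simp only [Pi.add_apply, add_mul, Finset.sum_add_distrib, ha c hc, hb c hc, add_zero]
  zero_mem' := by intro c hc; simp
  smul_mem' := by
    intro r a ha c hc
    simp only [Pi.smul_apply, smul_eq_mul, mul_assoc, ← Finset.mul_sum, ha c hc, mul_zero]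

/-- Relative minimum distance `d(C₁, C₂) = min { wt c : c ∈ C₁ ∖ C₂ }`. -/
noncomputable def relDist {ι : Type*} [Fintype ι] (C₁ C₂ : Submodule F (ι → F)) : ℕ :=
  sInf {w | ∃ c ∈ C₁, c ∉ C₂ ∧ hammingNorm c = w}

/-- Minimum distance of a code. -/
noncomputable def minDist {ι : Type*} [Fintype ι] (C : Submodule F (ι → F)) : ℕ :=
  sInf {w | ∃ c ∈ C, c ≠ 0 ∧ hammingNorm c = w}

end CodeDefs

/-!
Dualization reverses strict inclusions, so it suffices to treat nested codes `D₂ ⊊ D₁`. The code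
`Dᴵ` is a copy of the words of `D` supported in `I`. If `dim D₂ᴵ < dim D₁ᴵ`, then some word of
`D₁ ∖ D₂` is supported in `I`, so its weight is at most `#I`. Conversely, let `I` be the support of
a word `c ∈ D₁ ∖ D₂` of minimum weight and let `i ∈ I`. Subtracting from a word of `D₁` supported in
`I` the multiple of `c` that cancels its `i`-th coordinate leaves a word of weight less than `#I`,
which lies in `D₂` by minimality; so `c` spans `D₁ᴵ` modulo `D₂ᴵ`.
-/

section SupportedWords

variable {F : Type*} [Field F] {ι : Type*}

theorem mem_zeroOutside_erase [DecidableEq ι] {I : Finset ι} {i : ι} {x : ι → F}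
    (hx : x ∈ zeroOutside I) (hxi : x i = 0) : x ∈ zeroOutside (I.erase i) := by
  intro j hj
  by_cases hji : j = i
  · rwa [hji]
  · exact hx j fun hjI ↦ hj (Finset.mem_erase_of_ne_of_mem hji hjI)

theorem mem_zeroOutside_iff_support_subset [Fintype ι] [DecidableEq F] {I : Finset ι} {x : ι → F} :
    x ∈ zeroOutside I ↔ ({i | x i ≠ 0} : Finset ι) ⊆ I := by
  refine forall_congr' fun i ↦ ?_
  rw [Finset.mem_filter_univ, ne_eq, not_imp_comm]

theorem hammingNorm_le_card_of_mem_zeroOutside [Fintype ι] [DecidableEq F] {I : Finset ι}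
    {x : ι → F} (hx : x ∈ zeroOutside I) : hammingNorm x ≤ I.card :=
  Finset.card_le_card (mem_zeroOutside_iff_support_subset.1 hx)

theorem funLeft_injOn_zeroOutside (I : Finset ι) :
    Set.InjOn (LinearMap.funLeft F F (Subtype.val : I → ι))
      (zeroOutside I : Submodule F (ι → F)) := by
  intro x hx y hy hxy
  ext j
  by_cases hj : j ∈ I
  · exact congrFun hxy ⟨j, hj⟩
  · rw [hx j hj, hy j hj]

theorem finrank_shortenCode (D : Submodule F (ι → F)) (I : Finset ι) :
    finrank F (shortenCode D I) = finrank F ↥(D ⊓ zeroOutside I) := by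
  rw [shortenCode, ← LinearMap.range_domRestrict]
  refine LinearMap.finrank_range_of_inj fun x y hxy ↦ Subtype.ext ?_
  exact funLeft_injOn_zeroOutside I x.2.2 y.2.2 hxy

end SupportedWords

section NestedCodes

variable {F : Type*} [Field F] {ι : Type*} {D₁ D₂ : Submodule F (ι → F)} {I : Finset ι}

theorem exists_mem_zeroOutside_of_finrank_shortenCode_lt
    (hI : finrank F (shortenCode D₂ I) < finrank F (shortenCode D₁ I)) :
    ∃ c ∈ D₁, c ∉ D₂ ∧ c ∈ zeroOutside I := by
  have not_le : ¬shortenCode D₁ I ≤ shortenCode D₂ I :=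
    fun hle ↦ hI.not_ge (Submodule.finrank_mono hle)
  obtain ⟨_, ⟨c, ⟨hc₁, hcI⟩, rfl⟩, hc⟩ := SetLike.not_le_iff_exists.1 not_le
  exact ⟨c, hc₁, fun hc₂ ↦ hc ⟨c, ⟨hc₂, hcI⟩, rfl⟩, hcI⟩

variable [Fintype ι] [DecidableEq F]

theorem relDist_le {c : ι → F} (hc₁ : c ∈ D₁) (hc₂ : c ∉ D₂) : relDist D₁ D₂ ≤ hammingNorm c :=
  Nat.sInf_le ⟨c, hc₁, hc₂, rfl⟩

theorem exists_hammingNorm_eq_relDist (h : ¬D₁ ≤ D₂) :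
    ∃ c ∈ D₁, c ∉ D₂ ∧ hammingNorm c = relDist D₁ D₂ := by
  obtain ⟨c, hc₁, hc₂⟩ := SetLike.not_le_iff_exists.1 h
  have weights_nonempty : {w | ∃ c ∈ D₁, c ∉ D₂ ∧ hammingNorm c = w}.Nonempty :=
    ⟨hammingNorm c, c, hc₁, hc₂, rfl⟩
  exact Nat.sInf_mem weights_nonempty

theorem inf_zeroOutside_sup_span_singleton (hD : D₂ ≤ D₁)
    (hI : ∀ y ∈ D₁, y ∉ D₂ → I.card ≤ hammingNorm y) {c : ι → F} (hc₁ : c ∈ D₁) (hc₂ : c ∉ D₂)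
    (hcI : c ∈ zeroOutside I) :
    D₂ ⊓ zeroOutside I ⊔ F ∙ c = D₁ ⊓ zeroOutside I := by
  classical
  apply le_antisymm
  · exact sup_le (inf_le_inf_right _ hD) ((Submodule.span_singleton_le_iff_mem _ _).2 ⟨hc₁, hcI⟩)
  rintro x ⟨hx₁, hxI⟩
  obtain ⟨i, hci⟩ : ∃ i, c i ≠ 0 := Function.ne_iff.1 fun hc ↦ hc₂ (hc ▸ D₂.zero_mem)
  have hi : i ∈ I := not_imp_comm.1 (hcI i) hci
  set y := x - (x i / c i) • c with hy
  have hy₁ : y ∈ D₁ := D₁.sub_mem hx₁ (D₁.smul_mem _ hc₁)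
  have hyI : y ∈ zeroOutside I := Submodule.sub_mem _ hxI (Submodule.smul_mem _ _ hcI)
  have hyi : y i = 0 := by simp [hy, hci]
  have weight_lt : hammingNorm y < I.card :=
    (hammingNorm_le_card_of_mem_zeroOutside (mem_zeroOutside_erase hyI hyi)).trans_lt
      (Finset.card_erase_lt_of_mem hi)
  have hy₂ : y ∈ D₂ := by_contra fun hy₂ ↦ weight_lt.not_ge (hI y hy₁ hy₂)
  exact Submodule.mem_sup.2
    ⟨y, ⟨hy₂, hyI⟩, _, Submodule.smul_mem _ _ (Submodule.mem_span_singleton_self c),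
      sub_add_cancel _ _⟩

theorem finrank_shortenCode_eq_add_one (hD : D₂ ≤ D₁)
    (hI : ∀ y ∈ D₁, y ∉ D₂ → I.card ≤ hammingNorm y) {c : ι → F} (hc₁ : c ∈ D₁) (hc₂ : c ∉ D₂)
    (hcI : c ∈ zeroOutside I) :
    finrank F (shortenCode D₁ I) = finrank F (shortenCode D₂ I) + 1 := by
  have hc : c ∉ D₂ ⊓ zeroOutside I := fun hc ↦ hc₂ hc.1
  rw [finrank_shortenCode, finrank_shortenCode,
    ← inf_zeroOutside_sup_span_singleton hD hI hc₁ hc₂ hcI, Submodule.finrank_sup_span_singleton hc]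

theorem relDist_dual_eq_min_card_shorten_dim_one_general (h : D₂ < D₁) :
    relDist D₁ D₂
      = sInf {k | ∃ I : Finset ι, I.card = k ∧
          finrank F (shortenCode D₁ I) = finrank F (shortenCode D₂ I) + 1} := by
  obtain ⟨c, hc₁, hc₂, hc⟩ := exists_hammingNorm_eq_relDist h.not_ge
  symm
  apply IsLeast.csInf_eq
  constructor
  · have weight_min : ∀ y ∈ D₁, y ∉ D₂ → hammingNorm c ≤ hammingNorm y :=
      fun y hy₁ hy₂ ↦ hc.trans_le (relDist_le hy₁ hy₂)
    exact ⟨({i | c i ≠ 0} : Finset ι), hc, finrank_shortenCode_eq_add_one h.le weight_min hc₁ hc₂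
      (mem_zeroOutside_iff_support_subset.2 subset_rfl)⟩
  · rintro _ ⟨I, rfl, hI⟩
    obtain ⟨y, hy₁, hy₂, hyI⟩ :=
      exists_mem_zeroOutside_of_finrank_shortenCode_lt (Nat.lt_of_succ_le hI.ge)
    exact (relDist_le hy₁ hy₂).trans (hammingNorm_le_card_of_mem_zeroOutside hyI)

end NestedCodes

theorem dualCode_strictAnti {F : Type*} [Field F] {ι : Type*} [Fintype ι] :
    StrictAnti (dualCode : Submodule F (ι → F) → Submodule F (ι → F)) := by
  classical
  intro C₂ C h
  refine SetLike.lt_iff_le_and_exists.2 ⟨fun x hx c hc ↦ hx c (h.le hc), ?_⟩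
  obtain ⟨c, hc, hc₂⟩ := SetLike.exists_of_lt h
  obtain ⟨f, hfc, hf⟩ := Submodule.exists_le_ker_of_notMem hc₂
  obtain ⟨x, rfl⟩ := (dotProductEquiv F ι).surjective f
  exact ⟨x, fun y hy ↦ hf hy, fun hx ↦ hfc (hx c hc)⟩

/-- For linear codes `C₂ ⊊ C ⊆ 𝔽_q^n`,
`d(C₂^⊥, C^⊥) = min { #I : dim((C₂^⊥)^I / (C^⊥)^I) = 1 }`. -/
theorem relDist_dual_eq_min_card_shorten_dim_one
    {F : Type*} [Field F] [Fintype F] [DecidableEq F] {n : ℕ}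
    (C₂ C : Submodule F (Fin n → F)) (h : C₂ < C) :
    relDist (dualCode C₂) (dualCode C)
      = sInf {k | ∃ I : Finset (Fin n), I.card = k ∧
          finrank F (shortenCode (dualCode C₂) I)
            = finrank F (shortenCode (dualCode C) I) + 1} :=
  relDist_dual_eq_min_card_shorten_dim_one_general (dualCode_strictAnti h)
end

section
/- Let C₂ ⊊ C ⊆ 𝔽_q^n be linear codes and I ⊆ [n] with #I < d(C₂^⊥, C^⊥). Then the restricted codes coincide: C₂_I = C_I. -/
open Module

/-!
If the restriction of `x ∈ C` to `I` were not in the restriction of `C₂`, a linear functional on the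
coordinates in `I` would vanish on the latter and not at the former. Extended by zero, its
coefficient vector is a word of `C₂^⊥ ∖ C^⊥` of weight at most `#I`.
-/

section ExtendByZero

variable {ι κ R : Type*} [Fintype ι] [Fintype κ] {f : κ → ι}

theorem extend_zero_dotProduct [NonUnitalNonAssocSemiring R] (hf : f.Injective)
    (u : κ → R) (x : ι → R) :
    Function.extend f u (0 : ι → R) ⬝ᵥ x = u ⬝ᵥ (x ∘ f) := by
  refine (Fintype.sum_of_injective f hf _ _ (fun i hi ↦ ?_) fun k ↦ ?_).symm
  · rw [Function.extend_apply' _ _ i hi, Pi.zero_apply, zero_mul]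
  · rw [hf.extend_apply, Function.comp_apply]

theorem hammingNorm_extend_zero_le_card [Zero R] [DecidableEq R] (f : κ → ι) (u : κ → R) :
    hammingNorm (Function.extend f u (0 : ι → R)) ≤ Fintype.card κ := by
  classical
  have support_subset :
      ({i | Function.extend f u (0 : ι → R) i ≠ 0} : Finset ι) ⊆ Finset.univ.image f := by
    intro i hi
    by_contra hif
    have not_in_range : ¬∃ k, f k = i := by simpa using hif
    exact (Finset.mem_filter.mp hi).2 (Function.extend_apply' _ _ i not_in_range)
  exact (Finset.card_le_card support_subset).trans Finset.card_image_le

end ExtendByZero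

section Separation

variable {ι κ K : Type*} [Fintype ι] [Fintype κ] [Field K]

theorem exists_dotProduct_ne_zero_of_notMem {W : Submodule K (κ → K)} {v : κ → K} (hv : v ∉ W) :
    ∃ u : κ → K, (∀ w ∈ W, u ⬝ᵥ w = 0) ∧ u ⬝ᵥ v ≠ 0 := by
  classical
  obtain ⟨φ, hφv, hφW⟩ := Submodule.exists_le_ker_of_notMem hv
  obtain ⟨u, rfl⟩ := (dotProductEquiv K κ).surjective φ
  exact ⟨u, fun w hw ↦ hφW hw, hφv⟩

theorem exists_hammingNorm_le_card_of_funLeft_notMem_map [DecidableEq K] {f : κ → ι}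
    (hf : f.Injective) {D : Submodule K (ι → K)} {x : ι → K}
    (hx : LinearMap.funLeft K K f x ∉ D.map (LinearMap.funLeft K K f)) :
    ∃ y : ι → K, (∀ c ∈ D, y ⬝ᵥ c = 0) ∧ y ⬝ᵥ x ≠ 0 ∧ hammingNorm y ≤ Fintype.card κ := by
  obtain ⟨u, huD, hux⟩ := exists_dotProduct_ne_zero_of_notMem hx
  refine ⟨Function.extend f u 0, fun c hc ↦ ?_, ?_, hammingNorm_extend_zero_le_card f u⟩
  · rw [extend_zero_dotProduct hf]
    exact huD _ (Submodule.mem_map_of_mem hc)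
  · rwa [extend_zero_dotProduct hf]

end Separation

/-- `hI` encodes `#I < d(C₂^⊥, C^⊥)` without `relDist`, whose `sInf` would give the empty minimum
the junk value `0` instead of `∞`. -/
theorem restrict_eq_of_card_lt_relDist_dual_general
    {K ι : Type*} [Field K] [DecidableEq K] [Fintype ι] {C₂ C : Submodule K (ι → K)}
    (h : C₂ ≤ C) (I : Finset ι)
    (hI : ∀ y : ι → K, (∀ c ∈ C₂, y ⬝ᵥ c = 0) → (¬∀ c ∈ C, y ⬝ᵥ c = 0) →
      I.card < hammingNorm y) :
    C₂.map (LinearMap.funLeft K K (Subtype.val : I → ι)) =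
      C.map (LinearMap.funLeft K K (Subtype.val : I → ι)) := by
  refine le_antisymm (Submodule.map_mono h) (Submodule.map_le_iff_le_comap.mpr fun x hx ↦ ?_)
  by_contra hxI
  obtain ⟨y, hyC₂, hyx, hy_card⟩ :=
    exists_hammingNorm_le_card_of_funLeft_notMem_map Subtype.val_injective hxI
  have card_lt : I.card < hammingNorm y := hI y hyC₂ fun hyC ↦ hyx (hyC x hx)
  exact card_lt.not_ge (hy_card.trans_eq (Fintype.card_coe I))

/-- If `#I < d(C₂^⊥, C^⊥)` then the restricted codes coincide:
`C₂_I = C_I`. -/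
theorem restrict_eq_of_card_lt_relDist_dual
    {F : Type*} [Field F] [Fintype F] [DecidableEq F] {n : ℕ}
    (C₂ C : Submodule F (Fin n → F)) (h : C₂ < C) (I : Finset (Fin n))
    (hI : I.card < relDist (dualCode C₂) (dualCode C)) :
    restrictCode C₂ I = restrictCode C I :=
  restrict_eq_of_card_lt_relDist_dual_general h.le I fun y hyC₂ hyC ↦
    hI.trans_le (Nat.sInf_le ⟨y, hyC₂, hyC, rfl⟩)
end

section
/- Let C₂ ⊊ C₁ ⊆ 𝔽_q^n be linear codes with dim(C₁) = k₁ and dim(C₂) = k₂, and let I ⊆ [n] with #I ≥ n − d(C₁, C₂) + 1. Then the projection map from C₁/C₂ to C₁_I/C₂_I induced by restriction to I is injective; in particular dim(C₁_I / C₂_I) = k₁ − k₂. -/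
open Module

/-!
A codeword of `C₁` that vanishes on `I` has weight at most `n - #I < d(C₁, C₂)`, so it lies in `C₂`:
the kernel of the restriction meets `C₁` inside `C₂`. Injectivity on `C₁ / C₂` is then the modular
law `C₁ ⊓ (C₂ ⊔ ker) = C₂ ⊔ (C₁ ⊓ ker) = C₂`, and the dimensions agree because restriction kills the
same subspace `C₁ ⊓ ker = C₂ ⊓ ker` of both codes.
-/

section LinearAlgebra

theorem inf_comap_map_eq_of_inf_ker_le {R V W : Type*} [Ring R] [AddCommGroup V] [Module R V]
    [AddCommGroup W] [Module R W] {f : V →ₗ[R] W} {C₁ C₂ : Submodule R V} (hle : C₂ ≤ C₁)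
    (hker : C₁ ⊓ f.ker ≤ C₂) : C₁ ⊓ (C₂.map f).comap f = C₂ :=
  calc C₁ ⊓ (C₂.map f).comap f
      = (C₂ ⊔ f.ker) ⊓ C₁ := by rw [Submodule.comap_map_eq, inf_comm]
    _ = C₂ ⊔ C₁ ⊓ f.ker := by rw [sup_inf_assoc_of_le _ hle, inf_comm]
    _ = C₂ := sup_eq_left.mpr hker

variable {K V W : Type*} [DivisionRing K] [AddCommGroup V] [Module K V] [AddCommGroup W]
  [Module K W]

theorem finrank_map_add_finrank_inf_ker (f : V →ₗ[K] W) (C : Submodule K V)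
    [FiniteDimensional K C] :
    finrank K (C.map f) + finrank K (C ⊓ f.ker : Submodule K V) = finrank K C := by
  rw [← LinearMap.range_domRestrict, ← Submodule.map_comap_subtype,
    Submodule.finrank_map_subtype_eq, ← LinearMap.ker_domRestrict]
  exact (f.domRestrict C).finrank_range_add_finrank_ker

theorem finrank_map_add_finrank_eq_of_inf_ker_le {f : V →ₗ[K] W} {C₁ C₂ : Submodule K V}
    [FiniteDimensional K C₁] (hle : C₂ ≤ C₁) (hker : C₁ ⊓ f.ker ≤ C₂) :
    finrank K (C₁.map f) + finrank K C₂ = finrank K (C₂.map f) + finrank K C₁ := by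
  have : FiniteDimensional K C₂ := Submodule.finiteDimensional_of_le hle
  have hker_eq : C₁ ⊓ f.ker = C₂ ⊓ f.ker :=
    le_antisymm (le_inf hker inf_le_right) (inf_le_inf_right _ hle)
  rw [← finrank_map_add_finrank_inf_ker f C₁, ← finrank_map_add_finrank_inf_ker f C₂, hker_eq,
    add_left_comm]

end LinearAlgebra

theorem hammingNorm_add_card_le_of_eq_zero_on {ι : Type*} [Fintype ι] {β : ι → Type*}
    [∀ i, DecidableEq (β i)] [∀ i, Zero (β i)] {x : ∀ i, β i} {I : Finset ι}
    (hx : ∀ i ∈ I, x i = 0) : hammingNorm x + I.card ≤ Fintype.card ι := by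
  have hdisj : Disjoint ({i | x i ≠ 0} : Finset ι) I :=
    Finset.disjoint_left.mpr fun i hi hiI => (Finset.mem_filter.mp hi).2 (hx i hiI)
  rw [hammingNorm, ← Finset.card_disjUnion _ _ hdisj]
  exact Finset.card_le_univ _

section Codes

variable {F : Type*} [Field F] [DecidableEq F] {ι : Type*} [Fintype ι]
  {C₁ C₂ : Submodule F (ι → F)}

theorem relDist_le_hammingNorm {c : ι → F} (hc₁ : c ∈ C₁) (hc₂ : c ∉ C₂) :
    relDist C₁ C₂ ≤ hammingNorm c :=
  Nat.sInf_le ⟨c, hc₁, hc₂, rfl⟩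

theorem inf_ker_funLeft_le_of_card_lt {I : Finset ι}
    (hI : Fintype.card ι < relDist C₁ C₂ + I.card) :
    C₁ ⊓ (LinearMap.funLeft F F (Subtype.val : { i // i ∈ I } → ι)).ker ≤ C₂ := by
  rintro c ⟨hc₁, hc_ker⟩
  by_contra hc₂
  have hc_zero : ∀ i ∈ I, c i = 0 := fun i hi => congrFun hc_ker ⟨i, hi⟩
  have hweight := hammingNorm_add_card_le_of_eq_zero_on hc_zero
  have hdist := relDist_le_hammingNorm hc₁ hc₂
  omega

end Codes

theorem reconstruction_of_card_ge_general
    {F : Type*} [Field F] [DecidableEq F] {ι : Type*} [Fintype ι]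
    (C₂ C₁ : Submodule F (ι → F)) (h : C₂ < C₁) (I : Finset ι)
    (hI : Fintype.card ι - relDist C₁ C₂ + 1 ≤ I.card) :
    (∀ c ∈ C₁,
        (LinearMap.funLeft F F (Subtype.val : { i // i ∈ I } → ι)) c
          ∈ restrictCode C₂ I → c ∈ C₂)
    ∧ finrank F (restrictCode C₁ I) - finrank F (restrictCode C₂ I)
        = finrank F C₁ - finrank F C₂ := by
  have hker : C₁ ⊓ (LinearMap.funLeft F F (Subtype.val : { i // i ∈ I } → ι)).ker ≤ C₂ :=
    inf_ker_funLeft_le_of_card_lt (by omega)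
  refine ⟨fun c hc hcI => (inf_comap_map_eq_of_inf_ker_le h.le hker).le ⟨hc, hcI⟩, ?_⟩
  have hfinrank : finrank F (restrictCode C₁ I) + finrank F C₂
      = finrank F (restrictCode C₂ I) + finrank F C₁ :=
    finrank_map_add_finrank_eq_of_inf_ker_le h.le hker
  omega

/-- If `#I ≥ n − d(C₁,C₂) + 1`, then restriction to `I` is injective
on cosets of `C₂` in `C₁`; in particular `dim(C₁_I/C₂_I) = k₁ − k₂`. -/
theorem reconstruction_of_card_ge
    {F : Type*} [Field F] [Fintype F] [DecidableEq F] {n : ℕ}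
    (C₂ C₁ : Submodule F (Fin n → F)) (h : C₂ < C₁) (I : Finset (Fin n))
    (hI : n - relDist C₁ C₂ + 1 ≤ I.card) :
    (∀ c ∈ C₁,
        (LinearMap.funLeft F F (Subtype.val : { i // i ∈ I } → Fin n)) c
          ∈ restrictCode C₂ I → c ∈ C₂)
    ∧ finrank F (restrictCode C₁ I) - finrank F (restrictCode C₂ I)
        = finrank F C₁ - finrank F C₂ := by
  exact reconstruction_of_card_ge_general C₂ C₁ h I (by rwa [Fintype.card_fin])
end
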